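/- Let (𝒴, σ(𝒴)) be a measurable space, 𝒮(𝒴) ⊆ σ(𝒴), 𝒳 a set, and ℋ ⊆ 𝒴^𝒳 nonempty. Fix γ ∈ (0,1] and suppose d ∈ ℕ is such that ℋ does not γ-shatter any measure tree of depth d+1. Then there exists a randomized online learner 𝒜 such that for every T ∈ ℕ and every stream (x_1,S_1),…,(x_T,S_T) ∈ (𝒳 × 𝒮(𝒴))^T that is realizable by ℋ: (i) the number of rounds t with μ̂_t(𝒴 \ S_t) ≥ γ is at most d, and consequently (ii) the expected cumulative loss satisfies Σ_{t=1}^T μ̂_t(𝒴 \ S_t) ≤ d + γT. -/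

import Mathlib

/-!
The learner is a randomized Standard Optimal Algorithm. Shattering is a game on version spaces:
an adversary asks an instance, hears a prediction, and answers with a feedback set that makes the
prediction costly. The rank of a version space is the least number of rounds the adversary cannot
survive. Since it cannot survive that many, for each instance some prediction makes every costly
answer lower the rank; the learner predicts it. The rank never increases, is at most `d + 1` for
`H`, and stays positive on a realizable stream, so at most `d` rounds are costly. A costly round
loses at most `1` and any other at most `γ`.
-/

open MeasureTheory

/-- Restriction of a path of length `d` to its strict prefix before position `t`. -/
def pref {M : Type*} {d : ℕ} (y : Fin d → M) (t : Fin d) : Fin (t : ℕ) → M :=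
  fun i => y ⟨(i : ℕ), i.isLt.trans t.isLt⟩

/-- Restriction of a path of length `d` to its prefix up to and including position `t`. -/
def prefS {M : Type*} {d : ℕ} (y : Fin d → M) (t : Fin d) : Fin ((t : ℕ) + 1) → M :=
  fun i => y ⟨(i : ℕ), lt_of_le_of_lt (Nat.lt_succ_iff.mp i.isLt) t.isLt⟩

/-- `ℋ` shatters a Set Littlestone tree of depth `d` (with feedback sets from `𝒮`):
there are node labels `node t : 𝒴^t → 𝒳` and edge labels `edge t : 𝒴^{t+1} → 𝒮` such that
for every path `y ∈ 𝒴^d`, (a) `y t ∉ edge t (y_{≤ t})` for all `t`, and (b) some `h ∈ ℋ`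
satisfies `h (node t (y_{< t})) ∈ edge t (y_{≤ t})` for all `t`. -/
def SLShatter {X Y : Type*} (𝒮 : Set (Set Y)) (H : Set (X → Y)) (d : ℕ) : Prop :=
  ∃ (node : ∀ t : Fin d, (Fin (t : ℕ) → Y) → X)
    (edge : ∀ t : Fin d, (Fin ((t : ℕ) + 1) → Y) → Set Y),
    (∀ (t : Fin d) (ys : Fin ((t : ℕ) + 1) → Y), edge t ys ∈ 𝒮) ∧
    ∀ y : Fin d → Y,
      (∀ t : Fin d, y t ∉ edge t (prefS y t)) ∧
      ∃ h ∈ H, ∀ t : Fin d, h (node t (pref y t)) ∈ edge t (prefS y t)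

/-- `ℋ` `γ`-shatters a measure tree of depth `d`: nodes are labeled along paths of
probability measures, and for every path `μ ∈ Π(𝒴)^d`, (a) `μ t (edge t (μ_{≤t})) ≤ 1 - γ`
(strict inequality `< 1` when `γ = 0`), and (b) some `h ∈ ℋ` is consistent with the edges
along the path. -/
def MSShatter {X Y : Type*} [MeasurableSpace Y] (𝒮 : Set (Set Y)) (H : Set (X → Y))
    (γ : ℝ) (d : ℕ) : Prop :=
  ∃ (node : ∀ t : Fin d, (Fin (t : ℕ) → ProbabilityMeasure Y) → X)
    (edge : ∀ t : Fin d, (Fin ((t : ℕ) + 1) → ProbabilityMeasure Y) → Set Y),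
    (∀ (t : Fin d) (ms : Fin ((t : ℕ) + 1) → ProbabilityMeasure Y), edge t ms ∈ 𝒮) ∧
    ∀ μ : Fin d → ProbabilityMeasure Y,
      (∀ t : Fin d,
        if γ = 0 then (μ t).toMeasure (edge t (prefS μ t)) < 1
        else (μ t).toMeasure (edge t (prefS μ t)) ≤ 1 - ENNReal.ofReal γ) ∧
      ∃ h ∈ H, ∀ t : Fin d, h (node t (pref μ t)) ∈ edge t (prefS μ t)

/-- `ℋ` shatters a `p`-Set Littlestone tree of depth `d`: paths are sequences in `[p]`,
and for every path `q ∈ [p]^d`, (a) the `p` sets labeling the outgoing edges of each node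
along the path have empty intersection, and (b) some `h ∈ ℋ` is consistent with the edges
along the path. -/
def PSLShatter {X Y : Type*} (𝒮 : Set (Set Y)) (H : Set (X → Y)) (p d : ℕ) : Prop :=
  ∃ (node : ∀ t : Fin d, (Fin (t : ℕ) → Fin p) → X)
    (edge : ∀ t : Fin d, (Fin ((t : ℕ) + 1) → Fin p) → Set Y),
    (∀ (t : Fin d) (qs : Fin ((t : ℕ) + 1) → Fin p), edge t qs ∈ 𝒮) ∧
    ∀ q : Fin d → Fin p,
      (∀ t : Fin d, ⋂ i : Fin p, edge t (Fin.snoc (pref q t) i) = ∅) ∧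
      ∃ h ∈ H, ∀ t : Fin d, h (node t (pref q t)) ∈ edge t (prefS q t)

/-- The history (list of labeled examples) presented to an online learner before round `t`,
on the stream given by instances `x` and feedback sets `S`. -/
def hist {X Y : Type*} (x : ℕ → X) (S : ℕ → Set Y) (t : ℕ) : List (X × Set Y) :=
  (List.range t).map fun i => (x i, S i)

section Counting

lemma card_filter_range_add_le {α : Type*} [AddCommMonoidWithOne α] [Preorder α]
    [IsOrderedAddMonoid α] {Φ : ℕ → α} {p : ℕ → Prop} [DecidablePred p] {T : ℕ}
    (h_le : ∀ t < T, Φ (t + 1) ≤ Φ t) (h_drop : ∀ t < T, p t → Φ (t + 1) + 1 ≤ Φ t) :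
    (((Finset.range T).filter p).card : α) + Φ T ≤ Φ 0 := by
  induction T with
  | zero => simp
  | succ T ih =>
    have h_prev := ih (fun t ht => h_le t (ht.trans T.lt_succ_self))
      fun t ht => h_drop t (ht.trans T.lt_succ_self)
    refine le_trans ?_ h_prev
    rw [Finset.range_add_one, Finset.filter_insert]
    split_ifs with hT
    · rw [Finset.card_insert_of_notMem (by simp), Nat.cast_succ, add_assoc, add_comm 1]
      exact add_le_add_right (h_drop T T.lt_succ_self hT) _
    · exact add_le_add_right (h_le T T.lt_succ_self) _

lemma sum_le_card_filter_add_card_nsmul {ι R : Type*} [NonAssocSemiring R] [LinearOrder R]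
    [IsOrderedAddMonoid R] {s : Finset ι} {f : ι → R} {c : R} [DecidablePred fun i => c ≤ f i]
    (hf : ∀ i ∈ s, f i ≤ 1) (hc : 0 ≤ c) :
    ∑ i ∈ s, f i ≤ ((s.filter fun i => c ≤ f i).card : R) + s.card • c :=
  calc ∑ i ∈ s, f i
      ≤ ∑ i ∈ s, ((if c ≤ f i then 1 else 0) + c) := by
        refine Finset.sum_le_sum fun i hi => ?_
        split_ifs with hi_large
        · exact (hf i hi).trans (le_add_of_nonneg_right hc)
        · exact (not_le.1 hi_large).le.trans_eq (zero_add c).symm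
    _ = _ := by rw [Finset.sum_add_distrib, Finset.sum_boole, Finset.sum_const]

end Counting

section Game

variable {X Y M : Type*} {B : M → Set (Set Y)} {n : ℕ} {V W : Set (X → Y)}

/-- Shattering of a version space `V` as a game of `n` rounds with predictions in `M`, where `B m`
consists of the feedback sets that the adversary may answer to the prediction `m`: in each round
it picks an instance and answers every prediction so that some hypothesis remains consistent. -/
def GameShatters (B : M → Set (Set Y)) : ℕ → Set (X → Y) → Prop
  | 0, V => V.Nonempty
  | n + 1, V => ∃ x, ∀ m, ∃ s ∈ B m, GameShatters B n {h ∈ V | h x ∈ s}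

lemma GameShatters.mono (hVW : V ⊆ W) (hV : GameShatters B n V) : GameShatters B n W := by
  induction n generalizing V W with
  | zero => exact Set.Nonempty.mono hVW hV
  | succ n ih =>
    obtain ⟨x, hx⟩ := hV
    refine ⟨x, fun m => ?_⟩
    obtain ⟨s, hs, hVs⟩ := hx m
    exact ⟨s, hs, ih (fun h hh => ⟨hVW hh.1, hh.2⟩) hVs⟩

/-- The tree for `n + 1` rounds has the queried instance at its root, and below the root edge of
`m` the tree for the hypotheses consistent with the answer to `m`. -/
lemma GameShatters.exists_tree (hV : GameShatters B n V) :
    ∃ (node : ∀ t : Fin n, (Fin (t : ℕ) → M) → X)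
      (edge : ∀ t : Fin n, (Fin ((t : ℕ) + 1) → M) → Set Y),
      (∀ t ms, edge t ms ∈ B (ms (Fin.last t))) ∧
      ∀ m : Fin n → M, ∃ h ∈ V, ∀ t, h (node t (pref m t)) ∈ edge t (prefS m t) := by
  induction n generalizing V with
  | zero =>
    obtain ⟨h, hh⟩ := hV
    exact ⟨fun t => t.elim0, fun t => t.elim0, fun t => t.elim0,
      fun _ => ⟨h, hh, fun t => t.elim0⟩⟩
  | succ n ih =>
    obtain ⟨x, hx⟩ := hV
    choose s hs hVs using hx
    choose node edge h_edge h_path using fun m => ih (hVs m)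
    refine ⟨
      Fin.cases (fun _ => x) fun t (ms : Fin ((t : ℕ) + 1) → M) => node (ms 0) t (Fin.tail ms),
      Fin.cases (fun ms => s (ms 0)) fun t ms => edge (ms 0) t (Fin.tail ms),
      Fin.cases (fun ms => hs (ms 0)) fun t ms => h_edge (ms 0) t (Fin.tail ms), fun m => ?_⟩
    obtain ⟨h, ⟨hhV, hhs⟩, h_tail⟩ := h_path (m 0) (Fin.tail m)
    exact ⟨h, hhV, Fin.cases hhs h_tail⟩

/-- The least number of rounds for which `V` is not shattered, i.e. one more than the shattering
dimension of `V`; it is `⊤` if `V` is shattered for every number of rounds. -/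
noncomputable def shatterRank (B : M → Set (Set Y)) (V : Set (X → Y)) : ℕ∞ :=
  sInf ((↑) '' {n : ℕ | ¬ GameShatters B n V})

lemma shatterRank_le_of_not_gameShatters (hV : ¬ GameShatters B n V) : shatterRank B V ≤ n :=
  sInf_le (Set.mem_image_of_mem _ hV)

lemma not_gameShatters_of_shatterRank_eq (hV : shatterRank B V = n) : ¬ GameShatters B n V := by
  have h_nonempty : ((↑) '' {n : ℕ | ¬ GameShatters B n V} : Set ℕ∞).Nonempty := by
    rw [Set.nonempty_iff_ne_empty]
    intro h_empty
    simp [shatterRank, h_empty] at hV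
  obtain ⟨k, hk, hk_eq⟩ := csInf_mem h_nonempty
  rwa [← Nat.cast_injective (hk_eq.trans hV)]

lemma shatterRank_mono (hVW : V ⊆ W) : shatterRank B V ≤ shatterRank B W :=
  sInf_le_sInf (Set.image_mono fun _ hW hV => hW (hV.mono hVW))

lemma one_le_shatterRank (hV : V.Nonempty) : 1 ≤ shatterRank B V :=
  Order.one_le_iff_ne_zero.2 fun h_zero => not_gameShatters_of_shatterRank_eq h_zero hV

/-- A prediction of the Standard Optimal Algorithm: every answer in `B m` that leaves a consistent
hypothesis lowers the rank. The drop is not stated as a strict inequality because the rank may be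
infinite. -/
def IsOptimalPrediction (B : M → Set (Set Y)) (V : Set (X → Y)) (x : X) (m : M) : Prop :=
  ∀ s ∈ B m, {h ∈ V | h x ∈ s}.Nonempty → shatterRank B {h ∈ V | h x ∈ s} + 1 ≤ shatterRank B V

lemma exists_isOptimalPrediction [Nonempty M] (B : M → Set (Set Y)) (V : Set (X → Y)) (x : X) :
    ∃ m, IsOptimalPrediction B V x m := by
  induction h_rank : shatterRank B V using ENat.recTopCoe with
  | top => exact ⟨Classical.arbitrary M, fun s _ _ => h_rank ▸ le_top⟩
  | coe r =>
    have hV := not_gameShatters_of_shatterRank_eq h_rank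
    cases r with
    | zero =>
      exact ⟨Classical.arbitrary M,
        fun s _ h_cons => absurd (h_cons.mono (Set.sep_subset _ _)) hV⟩
    | succ k =>
      simp only [GameShatters, not_exists, not_forall, not_and] at hV
      obtain ⟨m, hm⟩ := hV x
      refine ⟨m, fun s hs _ => ?_⟩
      rw [h_rank, Nat.cast_succ]
      exact add_le_add_left (shatterRank_le_of_not_gameShatters (hm s hs)) 1

end Game

section Learning

variable {X Y M : Type*} {H : Set (X → Y)} {x : ℕ → X} {S : ℕ → Set Y}

/-- The version space of a history: the hypotheses in `H` consistent with its labeled examples. -/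
def versionSpace (H : Set (X → Y)) (l : List (X × Set Y)) : Set (X → Y) :=
  {h ∈ H | ∀ p ∈ l, h p.1 ∈ p.2}

lemma mem_versionSpace_hist {h : X → Y} {t : ℕ} :
    h ∈ versionSpace H (hist x S t) ↔ h ∈ H ∧ ∀ i < t, h (x i) ∈ S i := by
  simp [versionSpace, hist]

lemma versionSpace_hist_zero : versionSpace H (hist x S 0) = H := by
  ext h
  simp [mem_versionSpace_hist]

lemma versionSpace_hist_succ (t : ℕ) : versionSpace H (hist x S (t + 1)) =
    {h ∈ versionSpace H (hist x S t) | h (x t) ∈ S t} := by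
  ext h
  simp only [mem_versionSpace_hist, Nat.forall_lt_succ_right, Set.mem_ofPred_eq, and_assoc]

lemma versionSpace_hist_antitone : Antitone fun t => versionSpace H (hist x S t) :=
  antitone_nat_of_succ_le fun t => by
    rw [versionSpace_hist_succ]
    exact Set.sep_subset _ _

theorem card_filter_le_of_isOptimalPrediction {B : M → Set (Set Y)} {m : ℕ → M} {d T : ℕ}
    {p : ℕ → Prop} [DecidablePred p] (hH : ¬ GameShatters B (d + 1) H)
    (h_real : (versionSpace H (hist x S T)).Nonempty)
    (hm : ∀ t < T, IsOptimalPrediction B (versionSpace H (hist x S t)) (x t) (m t))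
    (hp : ∀ t < T, p t → S t ∈ B (m t)) :
    ((Finset.range T).filter p).card ≤ d := by
  set V : ℕ → Set (X → Y) := fun t => versionSpace H (hist x S t)
  have h_drop (t : ℕ) (ht : t < T) (hpt : p t) :
      shatterRank B (V (t + 1)) + 1 ≤ shatterRank B (V t) := by
    have h_cons : (V (t + 1)).Nonempty := h_real.mono (versionSpace_hist_antitone ht)
    simp only [V, versionSpace_hist_succ] at h_cons ⊢
    exact hm t ht (S t) (hp t ht hpt) h_cons
  have h_count : (((Finset.range T).filter p).card : ℕ∞) + 1 ≤ d + 1 :=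
    calc (((Finset.range T).filter p).card : ℕ∞) + 1
        ≤ ((Finset.range T).filter p).card + shatterRank B (V T) := by
          gcongr
          exact one_le_shatterRank h_real
      _ ≤ shatterRank B (V 0) := card_filter_range_add_le (Φ := fun t => shatterRank B (V t))
          (fun t _ => shatterRank_mono (versionSpace_hist_antitone t.le_succ)) h_drop
      _ ≤ d + 1 := by
          simpa only [V, versionSpace_hist_zero, Nat.cast_succ] using
            shatterRank_le_of_not_gameShatters hH
  exact Nat.le_of_succ_le_succ (by exact_mod_cast h_count)

end Learning

section MeasureTree

variable {X Y : Type*} [MeasurableSpace Y]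

/-- The feedback sets in `𝒮` on which the prediction `μ` has expected loss at least `γ`. -/
def costlyFeedback (𝒮 : Set (Set Y)) (γ : ℝ) (μ : ProbabilityMeasure Y) : Set (Set Y) :=
  {s ∈ 𝒮 | ENNReal.ofReal γ ≤ μ.toMeasure sᶜ}

lemma GameShatters.msShatter {𝒮 : Set (Set Y)} (h𝒮 : ∀ s ∈ 𝒮, MeasurableSet s) {γ : ℝ}
    (hγ : γ ≠ 0) {n : ℕ} {V : Set (X → Y)} (hV : GameShatters (costlyFeedback 𝒮 γ) n V) :
    MSShatter 𝒮 V γ n := by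
  obtain ⟨node, edge, h_edge, h_path⟩ := hV.exists_tree
  refine ⟨node, edge, fun t ms => (h_edge t ms).1, fun μ => ⟨fun t => ?_, h_path μ⟩⟩
  obtain ⟨h_mem, h_loss⟩ := h_edge t (prefS μ t)
  have h_mass := prob_compl_le_one_sub_of_le_prob h_loss (h𝒮 _ h_mem).compl
  rw [compl_compl] at h_mass
  rwa [if_neg hγ]

end MeasureTree

open scoped Classical in
/-- If `ℋ` is nonempty and does not `γ`-shatter any measure tree of depth
`d+1` (with `γ ∈ (0,1]`), then there is a randomized online learner such that on every
realizable stream: (i) at most `d` rounds have `μ̂_t(𝒴 \ S_t) ≥ γ`, and (ii) the expected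
cumulative loss is at most `d + γT`. -/
theorem stmt5 {X Y : Type*} [MeasurableSpace Y]
    (𝒮 : Set (Set Y)) (h𝒮 : ∀ s ∈ 𝒮, MeasurableSet s)
    (H : Set (X → Y)) (hH : H.Nonempty)
    (γ : ℝ) (hγ0 : 0 < γ) (hγ1 : γ ≤ 1) (d : ℕ)
    (hshat : ¬ MSShatter 𝒮 H γ (d + 1)) :
    ∃ A : List (X × Set Y) → X → ProbabilityMeasure Y,
      ∀ (T : ℕ) (x : ℕ → X) (S : ℕ → Set Y),
        (∀ t < T, S t ∈ 𝒮) →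
        (∃ h ∈ H, ∀ t < T, h (x t) ∈ S t) →
        (((Finset.range T).filter fun t =>
            ENNReal.ofReal γ ≤ (A (hist x S t) (x t)).toMeasure ((S t)ᶜ)).card ≤ d) ∧
        (∑ t ∈ Finset.range T, (A (hist x S t) (x t)).toMeasure ((S t)ᶜ) ≤
          (d : ENNReal) + ENNReal.ofReal (γ * T)) := by
  have h_game : ¬ GameShatters (costlyFeedback 𝒮 γ) (d + 1) H :=
    fun h_shat => hshat (h_shat.msShatter h𝒮 hγ0.ne')
  choose A hA using fun l x =>
    haveI : Nonempty (ProbabilityMeasure Y) := ⟨diracProba (hH.some x)⟩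
    exists_isOptimalPrediction (costlyFeedback 𝒮 γ) (versionSpace H l) x
  refine ⟨A, fun T x S hS ⟨h, hh, h_real⟩ => ?_⟩
  have h_card := card_filter_le_of_isOptimalPrediction h_game
    ⟨h, mem_versionSpace_hist.2 ⟨hh, h_real⟩⟩ (fun t _ => hA (hist x S t) (x t))
    fun t ht h_loss => ⟨hS t ht, h_loss⟩
  refine ⟨h_card, (sum_le_card_filter_add_card_nsmul (c := ENNReal.ofReal γ)
    (fun _ _ => prob_le_one) zero_le).trans ?_⟩
  rw [Finset.card_range, nsmul_eq_mul, mul_comm γ, ENNReal.ofReal_mul T.cast_nonneg,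
    ENNReal.ofReal_natCast]
  gcongr
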